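/- arXiv:2510.24312 — 3 statements merged into one kernel-verified Lean document; each statement's English description precedes it below -/
import Mathlib

section
/- Let n and k be positive integers. The equation (n‼)^k + n^k = (k‼)^n + k^n holds if and only if k = n. -/
/-!
If `k < n`, the left-hand side is strictly larger, so equality forces `k = n` by symmetry.

The core is that `n‼ ^ (1 / n)` increases from `n = 3` on, with some room to spare:
`3 * n‼ ^ (n + 1) ≤ 2 * (n + 1)‼ ^ n` (`step`). This is an induction in steps of two, using the
Wallis-type bound `(n + 2) * n‼ ^ 2 ≤ 2 * (n + 1)‼ ^ 2` (`wallis`) and Bernoulli's inequality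
`2 * (n + 2) ^ (n + 2) ≤ (n + 3) ^ (n + 2)`. The monotonicity propagates a bound
`c * k‼ ^ n ≤ n‼ ^ k` with `1 ≤ c` from one `n ≥ 3` to all larger ones (`chain`). For `k ≥ 4`,
where `2 * k ≤ k‼`, the constant `c = 3 / 2` absorbs the term `k ^ n`; for `k = 2, 3`, where
`k‼ = k`, the constant `c = 2` is available from `n = 4` on.
-/

open Nat

lemma wallis (n : ℕ) : (n + 2) * n‼ ^ 2 ≤ 2 * (n + 1)‼ ^ 2 := by
  induction n using Nat.twoStepInduction with
  | zero => decide
  | one => decide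
  | more n ih _ =>
    rw [show n + 2 + 1 = (n + 1) + 2 by ring, doubleFactorial_add_two, doubleFactorial_add_two]
    calc (n + 2 + 2) * ((n + 2) * n‼) ^ 2
        = ((n + 4) * (n + 2)) * ((n + 2) * n‼ ^ 2) := by ring
      _ ≤ (n + 3) ^ 2 * (2 * (n + 1)‼ ^ 2) := by
        gcongr
        nlinarith
      _ = 2 * ((n + 1 + 2) * (n + 1)‼) ^ 2 := by ring

lemma bernoulli_pow (m : ℕ) (hm : 0 < m) : 2 * m ^ m ≤ (m + 1) ^ m := by
  obtain ⟨l, rfl⟩ := Nat.exists_eq_add_of_le' hm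
  calc 2 * (l + 1) ^ (l + 1) = (l + 1) ^ (l + 1) + (l + 1) * (l + 1) ^ l * 1 := by ring
    _ ≤ (l + 1 + 1) ^ (l + 1) := by
      have h := pow_add_mul_le_add_pow (a := l + 1) (b := 1) (by omega) (by omega) (l + 1)
      simpa using h

/-- `n‼ ^ (1 / n)` increases from `n = 3` on. The factor `3 / 2` cannot be raised to `2`,
which fails at `n = 4`. -/
lemma step (n : ℕ) (hn : 3 ≤ n) : 3 * n‼ ^ (n + 1) ≤ 2 * (n + 1)‼ ^ n := by
  obtain ⟨m, rfl⟩ := Nat.exists_eq_add_of_le' hn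
  clear hn
  induction m using Nat.twoStepInduction with
  | zero => decide
  | one => decide
  | more m ih _ =>
    rw [show m + 2 + 3 = (m + 3) + 2 by ring]
    generalize m + 3 = n at ih
    rw [show n + 2 + 1 = (n + 1) + 2 by ring, doubleFactorial_add_two, doubleFactorial_add_two]
    calc 3 * ((n + 2) * n‼) ^ (n + 1 + 2)
        = (n + 2) ^ (n + 2) * (3 * n‼ ^ (n + 1)) * ((n + 2) * n‼ ^ 2) := by
          rw [mul_pow]
          ring
      _ ≤ (n + 2) ^ (n + 2) * (2 * (n + 1)‼ ^ n) * (2 * (n + 1)‼ ^ 2) := by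
        gcongr ?_ * ?_ * ?_
        · exact le_rfl
        · exact wallis n
      _ = (2 * (n + 2) ^ (n + 2)) * (2 * (n + 1)‼ ^ (n + 2)) := by ring
      _ ≤ (n + 2 + 1) ^ (n + 2) * (2 * (n + 1)‼ ^ (n + 2)) := by
        gcongr ?_ * _
        exact bernoulli_pow (n + 2) (by omega)
      _ = 2 * ((n + 1 + 2) * (n + 1)‼) ^ (n + 2) := by
        rw [mul_pow]
        ring

lemma chain (c : ℝ) (hc : 1 ≤ c) (k m n : ℕ) (hm : 3 ≤ m) (hmn : m ≤ n)
    (h : c * (k‼ : ℝ) ^ m ≤ (m‼ : ℝ) ^ k) : c * (k‼ : ℝ) ^ n ≤ (n‼ : ℝ) ^ k := by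
  induction n, hmn using Nat.le_induction with
  | base => exact h
  | succ n hmn ih =>
    have hs : (n‼ : ℝ) ^ (n + 1) ≤ ((n + 1)‼ : ℝ) ^ n := by
      have := step n (hm.trans hmn)
      exact_mod_cast (by omega : n‼ ^ (n + 1) ≤ (n + 1)‼ ^ n)
    -- compare `n`-th powers
    refine le_of_pow_le_pow_left₀ (n := n) (by omega) (by positivity) ?_
    calc (c * (k‼ : ℝ) ^ (n + 1)) ^ n = c ^ n * (k‼ : ℝ) ^ (n * (n + 1)) := by ring
      _ ≤ c ^ (n + 1) * (k‼ : ℝ) ^ (n * (n + 1)) := by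
        gcongr
        omega
      _ = (c * (k‼ : ℝ) ^ n) ^ (n + 1) := by ring
      _ ≤ ((n‼ : ℝ) ^ k) ^ (n + 1) := by gcongr
      _ = ((n‼ : ℝ) ^ (n + 1)) ^ k := by ring
      _ ≤ (((n + 1)‼ : ℝ) ^ n) ^ k := by gcongr
      _ = (((n + 1)‼ : ℝ) ^ k) ^ n := by ring

lemma two_mul_le_doubleFactorial (k : ℕ) (hk : 4 ≤ k) : 2 * k ≤ k‼ := by
  obtain ⟨j, rfl⟩ := Nat.exists_eq_add_of_le' hk
  have h : 2 ≤ (j + 2)‼ := by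
    rw [doubleFactorial_add_two]
    nlinarith [doubleFactorial_pos j]
  rw [show j + 4 = (j + 2) + 2 by ring, doubleFactorial_add_two (j + 2)]
  nlinarith

lemma lt_of_lt (n k : ℕ) (hk : 0 < k) (hkn : k < n) :
    k‼ ^ n + k ^ n < n‼ ^ k + n ^ k := by
  have hpos : 0 < n ^ k := pow_pos (by omega) k
  obtain rfl | rfl | rfl | h4 : k = 1 ∨ k = 2 ∨ k = 3 ∨ 4 ≤ k := by omega
  · have := doubleFactorial_pos n
    simp
    omega
  · obtain rfl | h : n = 3 ∨ 4 ≤ n := by omega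
    · decide
    · have h := chain 2 (by norm_num) 2 4 n (by norm_num) h (by norm_num [doubleFactorial])
      have h : 2 * 2‼ ^ n ≤ n‼ ^ 2 := by exact_mod_cast h
      rw [show 2‼ = 2 from rfl] at h ⊢
      omega
  · have h := chain 2 (by norm_num) 3 4 n (by norm_num) hkn (by norm_num [doubleFactorial])
    have h : 2 * 3‼ ^ n ≤ n‼ ^ 3 := by exact_mod_cast h
    rw [show 3‼ = 3 from rfl] at h ⊢
    omega
  · have hb : (3 / 2 : ℝ) * (k‼ : ℝ) ^ (k + 1) ≤ ((k + 1)‼ : ℝ) ^ k := by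
      have h : (3 : ℝ) * (k‼ : ℝ) ^ (k + 1) ≤ 2 * ((k + 1)‼ : ℝ) ^ k := by
        exact_mod_cast step k (by omega)
      linarith
    have h := chain (3 / 2) (by norm_num) k (k + 1) n (by omega) hkn hb
    have h : 3 * k‼ ^ n ≤ 2 * n‼ ^ k := by
      have h' : (3 : ℝ) * (k‼ : ℝ) ^ n ≤ 2 * (n‼ : ℝ) ^ k := by linarith
      exact_mod_cast h'
    have hk2 : 2 * k ^ n ≤ k‼ ^ n :=
      calc 2 * k ^ n ≤ 2 ^ n * k ^ n := by
            gcongr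
            exact Nat.le_self_pow (by omega) 2
        _ = (2 * k) ^ n := (mul_pow 2 k n).symm
        _ ≤ k‼ ^ n := by
            gcongr
            exact two_mul_le_doubleFactorial k h4
    omega

theorem doubleFactorial_add_eq_iff (n k : ℕ) (hn : 0 < n) (hk : 0 < k) :
    (n‼) ^ k + n ^ k = (k‼) ^ n + k ^ n ↔ k = n := by
  constructor
  · intro h
    rcases lt_trichotomy k n with hlt | heq | hgt
    · exact absurd h (lt_of_lt n k hk hlt).ne'
    · exact heq
    · exact absurd h (lt_of_lt k n hn hgt).ne
  · rintro rfl
    rfl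
end

section
/- Let n and k be positive integers. The equation (n‼)^k − n^(k‼) = (k‼)^n − k^(n‼) holds if and only if k = n or (k,n) is one of (1,2), (2,1), (1,3), (3,1), (2,3), (3,2). -/
open Nat

/-!
Written additively, the equation is `n‼ ^ k + k ^ n‼ = k‼ ^ n + n ^ k‼`, which is symmetric in
`n` and `k`, so `k < n` may be assumed.

For `k ≤ 3` one has `k‼ = k`, and for `n ≥ 4` one has `n < n‼`; then `n‼ ^ k > n ^ k` and
`k ^ n‼ ≥ k ^ n`, so the left side is too large. Only `n ≤ 3` remains.

For `4 ≤ k < n` the term `k ^ n‼` alone is at least the whole right side, because it is at least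
twice each summand. For `k‼ ^ n` this follows from the crude bound `k‼ ≤ k ^ (k - 2)`
(`doubleFactorial_le_pow`). For `n ^ k‼` it is an induction on `n`
(`two_mul_pow_doubleFactorial_le`), whose step combines `(n + 1) ^ 2 ≤ n ^ 3` with the growth
estimate `3 * n‼ + 2 ≤ 2 * (n + 1)‼` (`three_mul_doubleFactorial_le`).
-/

lemma doubleFactorial_le_pow : ∀ m : ℕ, (m + 4)‼ ≤ (m + 4) ^ (m + 2)
  | 0 => by decide
  | 1 => by decide
  | m + 2 => by
    have ih := doubleFactorial_le_pow m
    calc (m + 2 + 4)‼ = (m + 6) * (m + 4)‼ := doubleFactorial_add_two (m + 4)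
      _ ≤ (m + 6) * (m + 6) ^ (m + 2) := by
        refine Nat.mul_le_mul_left _ (ih.trans (Nat.pow_le_pow_left (by omega) _))
      _ = (m + 6) ^ (m + 3) := by ring
      _ ≤ (m + 2 + 4) ^ (m + 2 + 2) := Nat.pow_le_pow_right (by omega) (by omega)

/-- The ratio `(k + 1)‼ / k‼` exceeds `3 / 2` from `k = 4` on: passing from `k` to `k + 2`
multiplies it by `(k + 3) / (k + 2)`. -/
lemma three_mul_doubleFactorial_le : ∀ m : ℕ, 3 * (m + 4)‼ + 2 ≤ 2 * (m + 5)‼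
  | 0 => by decide
  | 1 => by decide
  | m + 2 => by
    have ih := three_mul_doubleFactorial_le m
    have h1 : (m + 2 + 4)‼ = (m + 6) * (m + 4)‼ := doubleFactorial_add_two (m + 4)
    have h2 : (m + 2 + 5)‼ = (m + 7) * (m + 5)‼ := doubleFactorial_add_two (m + 5)
    rw [h1, h2]
    nlinarith

lemma succ_sq_le_cube (n : ℕ) (hn : 4 ≤ n) : (n + 1) ^ 2 ≤ n ^ 3 := by
  nlinarith [Nat.mul_le_mul hn hn, Nat.mul_le_mul_right (n * n) hn]

lemma two_mul_pow_doubleFactorial_le (k n : ℕ) (hk : 4 ≤ k) (hn : k + 1 ≤ n) :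
    2 * n ^ k‼ ≤ k ^ n‼ := by
  induction n, hn using Nat.le_induction with
  | base =>
    obtain ⟨m, rfl⟩ := Nat.exists_eq_add_of_le' hk
    have hr := three_mul_doubleFactorial_le m
    refine (Nat.pow_le_pow_iff_left (n := 2) (by norm_num)).1 ?_
    calc (2 * (m + 4 + 1) ^ (m + 4)‼) ^ 2 = 4 * ((m + 4 + 1) ^ 2) ^ (m + 4)‼ := by
          rw [mul_pow, ← pow_mul, ← pow_mul, mul_comm _ 2]; norm_num
      _ ≤ (m + 4) ^ 2 * ((m + 4) ^ 3) ^ (m + 4)‼ :=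
          Nat.mul_le_mul (by nlinarith) (Nat.pow_le_pow_left (succ_sq_le_cube _ hk) _)
      _ = (m + 4) ^ (3 * (m + 4)‼ + 2) := by rw [← pow_mul, ← pow_add, add_comm 2]
      _ ≤ (m + 4) ^ (2 * (m + 5)‼) := Nat.pow_le_pow_right (by omega) hr
      _ = ((m + 4) ^ (m + 4 + 1)‼) ^ 2 := by rw [← pow_mul, mul_comm]
  | succ n hn ih =>
    have hr : 3 * n‼ ≤ 2 * (n + 1)‼ := by
      obtain ⟨m, rfl⟩ := Nat.exists_eq_add_of_le' (show 4 ≤ n by omega)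
      have := three_mul_doubleFactorial_le m
      exact le_of_add_right_le this
    refine (Nat.pow_le_pow_iff_left (n := 2) (by norm_num)).1 ?_
    calc (2 * (n + 1) ^ k‼) ^ 2 = 4 * ((n + 1) ^ 2) ^ k‼ := by
          rw [mul_pow, ← pow_mul, ← pow_mul, mul_comm _ 2]; norm_num
      _ ≤ 8 * (n ^ 3) ^ k‼ :=
          Nat.mul_le_mul (by norm_num)
            (Nat.pow_le_pow_left (succ_sq_le_cube _ (by omega)) _)
      _ = (2 * n ^ k‼) ^ 3 := by
          rw [mul_pow, ← pow_mul, ← pow_mul, mul_comm _ 3]; norm_num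
      _ ≤ (k ^ n‼) ^ 3 := Nat.pow_le_pow_left ih _
      _ = k ^ (3 * n‼) := by rw [← pow_mul, mul_comm]
      _ ≤ k ^ (2 * (n + 1)‼) := Nat.pow_le_pow_right (by omega) hr
      _ = (k ^ (n + 1)‼) ^ 2 := by rw [← pow_mul, mul_comm]

lemma le_doubleFactorial : ∀ n : ℕ, n ≤ n‼
  | 0 => by decide
  | 1 => by decide
  | n + 2 => by
    rw [doubleFactorial_add_two]
    exact Nat.le_mul_of_pos_right _ (doubleFactorial_pos n)

lemma two_mul_doubleFactorial_pow_le (k n : ℕ) (hk : 4 ≤ k) (hn : k + 1 ≤ n) :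
    2 * k‼ ^ n ≤ k ^ n‼ := by
  obtain ⟨m, rfl⟩ := Nat.exists_eq_add_of_le' hk
  obtain ⟨j, rfl⟩ := Nat.exists_eq_add_of_le hn
  have he : (m + 2) * (m + 4 + 1 + j) + 1 ≤ (m + 4 + 1 + j)‼ := by
    have h1 : (m + 4 + 1 + j)‼ = (m + 3 + j + 2) * (m + 3 + j)‼ := by
      rw [← doubleFactorial_add_two]; congr 1; omega
    have h2 := Nat.mul_le_mul_left (m + 3 + j + 2) (le_doubleFactorial (m + 3 + j))
    rw [h1]
    nlinarith
  calc 2 * (m + 4)‼ ^ (m + 4 + 1 + j)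
      ≤ (m + 4) * ((m + 4) ^ (m + 2)) ^ (m + 4 + 1 + j) :=
        Nat.mul_le_mul (by omega) (Nat.pow_le_pow_left (doubleFactorial_le_pow m) _)
    _ = (m + 4) ^ ((m + 2) * (m + 4 + 1 + j) + 1) := by rw [← pow_mul, pow_succ, mul_comm]
    _ ≤ _ := Nat.pow_le_pow_right (by omega) he

lemma lt_doubleFactorial (n : ℕ) (hn : 4 ≤ n) : n < n‼ := by
  obtain ⟨m, rfl⟩ := Nat.exists_eq_add_of_le' hn
  have h1 : (m + 4)‼ = (m + 4) * (m + 2)‼ := doubleFactorial_add_two (m + 2)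
  have h2 := le_doubleFactorial (m + 2)
  rw [h1]
  nlinarith

lemma eq_of_lt (n k : ℕ) (hk : 0 < k) (hkn : k < n)
    (h : n‼ ^ k + k ^ n‼ = k‼ ^ n + n ^ k‼) :
    (k = 1 ∧ n = 2) ∨ (k = 1 ∧ n = 3) ∨ (k = 2 ∧ n = 3) := by
  rcases Nat.lt_or_ge k 4 with hk4 | hk4
  · rcases Nat.lt_or_ge n 4 with hn4 | hn4
    · omega
    · exfalso
      have hkk : k‼ = k := by interval_cases k <;> rfl
      have hlt := lt_doubleFactorial n hn4
      have h1 : n ^ k < n‼ ^ k := Nat.pow_lt_pow_left hlt (by omega)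
      have h2 : k ^ n ≤ k ^ n‼ := Nat.pow_le_pow_right hk hlt.le
      rw [hkk] at h
      omega
  · exfalso
    have h1 := two_mul_pow_doubleFactorial_le k n hk4 hkn
    have h2 := two_mul_doubleFactorial_pow_le k n hk4 hkn
    have h3 : 0 < n‼ ^ k := Nat.pow_pos (doubleFactorial_pos n)
    omega

theorem doubleFactorial_sub_pow_doubleFactorial_eq_iff (n k : ℕ) (hn : 0 < n) (hk : 0 < k) :
    ((n‼ : ℤ)) ^ k - (n : ℤ) ^ (k‼) = ((k‼ : ℤ)) ^ n - (k : ℤ) ^ (n‼) ↔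
      k = n ∨ (k, n) = (1, 2) ∨ (k, n) = (2, 1) ∨ (k, n) = (1, 3) ∨ (k, n) = (3, 1) ∨
        (k, n) = (2, 3) ∨ (k, n) = (3, 2) := by
  simp only [Prod.mk.injEq]
  constructor
  · intro h
    have h' : n‼ ^ k + k ^ n‼ = k‼ ^ n + n ^ k‼ := by
      zify
      linarith
    rcases lt_trichotomy k n with hlt | heq | hgt
    · have := eq_of_lt n k hk hlt h'
      omega
    · exact Or.inl heq
    · have := eq_of_lt k n hn hgt (by omega)
      omega
  · rintro (rfl | ⟨rfl, rfl⟩ | ⟨rfl, rfl⟩ | ⟨rfl, rfl⟩ | ⟨rfl, rfl⟩ | ⟨rfl, rfl⟩ | ⟨rfl, rfl⟩)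
    · rfl
    all_goals simp [Nat.doubleFactorial]
end

section
/- For all integers n and k with n > k ≥ 3, one has (n‼)^k − n^k > (k‼)^n − k^n. -/
/-!
The inequality splits into `n ^ k < k ^ n` and `(k‼) ^ n ≤ (n‼) ^ k` for `3 ≤ k < n`. Both are
monotonicity statements, for `j ↦ j ^ (1 / j)` (decreasing from `3` on) and for
`j ↦ (j‼) ^ (1 / j)` (increasing), so each reduces to comparing consecutive indices
(`pow_succ_lt_self_pow`, `doubleFactorial_step`); the passage from consecutive to arbitrary indices
only uses `(x ^ a) ^ b = (x ^ b) ^ a` and cancellation of an exponent.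

The consecutive case for double factorials says `j‼ ≤ ((j + 1)‼ / j‼) ^ j`. The Wallis-type bounds
`((2m+1)‼ / (2m)‼)² ≥ m + 1` and `((2m+2)‼ / (2m+1)‼)² ≥ 2m + 3` bound the ratio from below, and
`(2m)‼ ≤ (m + 1) ^ m` and `(2m+1)‼ ≤ (2m + 3) ^ m` bound the left side from above.
-/

open Nat

/-- Bernoulli's inequality, as the two leading terms of the binomial expansion. -/
lemma pow_add_mul_pow_le (a t : ℕ) : a ^ (t + 1) + (t + 1) * a ^ t ≤ (a + 1) ^ (t + 1) := by
  induction t with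
  | zero => simp
  | succ t ih =>
    calc a ^ (t + 1 + 1) + (t + 1 + 1) * a ^ (t + 1)
        ≤ a ^ (t + 1 + 1) + (t + 1 + 1) * a ^ (t + 1) + (t + 1) * a ^ t := Nat.le_add_right _ _
      _ = (a ^ (t + 1) + (t + 1) * a ^ t) * (a + 1) := by ring
      _ ≤ (a + 1) ^ (t + 1) * (a + 1) := by gcongr
      _ = _ := by rw [← pow_succ]

lemma two_mul_pow_le (m : ℕ) : 2 * (m + 1) ^ (m + 1) ≤ (m + 2) ^ (m + 1) := by
  calc 2 * (m + 1) ^ (m + 1) = (m + 1) ^ (m + 1) + (m + 1) * (m + 1) ^ m := by ring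
    _ ≤ _ := pow_add_mul_pow_le (m + 1) m

lemma doubleFactorial_even_le (m : ℕ) : (2 * m)‼ ≤ (m + 1) ^ m := by
  induction m with
  | zero => simp
  | succ m ih =>
    have e : (2 * (m + 1))‼ = (2 * m + 2) * (2 * m)‼ := Nat.doubleFactorial_add_two (2 * m)
    rw [e]
    calc (2 * m + 2) * (2 * m)‼ ≤ (2 * m + 2) * (m + 1) ^ m := by gcongr
      _ = 2 * (m + 1) ^ (m + 1) := by ring
      _ ≤ _ := two_mul_pow_le m

lemma doubleFactorial_odd_le (m : ℕ) : (2 * m + 1)‼ ≤ (2 * m + 3) ^ m := by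
  induction m with
  | zero => simp
  | succ m ih =>
    have e : (2 * (m + 1) + 1)‼ = (2 * m + 3) * (2 * m + 1)‼ :=
      Nat.doubleFactorial_add_two (2 * m + 1)
    rw [e]
    calc (2 * m + 3) * (2 * m + 1)‼ ≤ (2 * m + 3) * (2 * m + 3) ^ m := by gcongr
      _ = (2 * m + 3) ^ (m + 1) := by ring
      _ ≤ _ := by gcongr; omega

/-- Wallis-type lower bound for `(2m+1)‼ / (2m)‼`. -/
lemma wallis_even (m : ℕ) : (m + 1) * (2 * m)‼ ^ 2 ≤ (2 * m + 1)‼ ^ 2 := by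
  induction m with
  | zero => simp
  | succ m ih =>
    have e : (2 * (m + 1))‼ = (2 * m + 2) * (2 * m)‼ := Nat.doubleFactorial_add_two (2 * m)
    have e' : (2 * (m + 1) + 1)‼ = (2 * m + 3) * (2 * m + 1)‼ :=
      Nat.doubleFactorial_add_two (2 * m + 1)
    rw [e, e']
    calc (m + 1 + 1) * ((2 * m + 2) * (2 * m)‼) ^ 2
        = (4 * (m + 1) * (m + 2)) * ((m + 1) * (2 * m)‼ ^ 2) := by ring
      _ ≤ (2 * m + 3) ^ 2 * (2 * m + 1)‼ ^ 2 := by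
        apply Nat.mul_le_mul _ ih
        nlinarith
      _ = _ := by ring

/-- Wallis-type lower bound for `(2m+2)‼ / (2m+1)‼`. -/
lemma wallis_odd (m : ℕ) : (2 * m + 3) * (2 * m + 1)‼ ^ 2 ≤ (2 * m + 2)‼ ^ 2 := by
  induction m with
  | zero => simp [Nat.doubleFactorial]
  | succ m ih =>
    have e : (2 * (m + 1) + 2)‼ = (2 * m + 4) * (2 * m + 2)‼ :=
      Nat.doubleFactorial_add_two (2 * m + 2)
    have e' : (2 * (m + 1) + 1)‼ = (2 * m + 3) * (2 * m + 1)‼ :=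
      Nat.doubleFactorial_add_two (2 * m + 1)
    rw [e, e']
    calc (2 * (m + 1) + 3) * ((2 * m + 3) * (2 * m + 1)‼) ^ 2
        = ((2 * m + 5) * (2 * m + 3)) * ((2 * m + 3) * (2 * m + 1)‼ ^ 2) := by ring
      _ ≤ (2 * m + 4) ^ 2 * (2 * m + 2)‼ ^ 2 := by
        apply Nat.mul_le_mul _ ih
        nlinarith
      _ = _ := by ring

lemma doubleFactorial_step (j : ℕ) : (j‼) ^ (j + 1) ≤ ((j + 1)‼) ^ j := by
  obtain ⟨m, rfl | rfl⟩ := Nat.even_or_odd' j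
  · calc (2 * m)‼ ^ (2 * m + 1) = (2 * m)‼ * ((2 * m)‼ ^ 2) ^ m := by ring
      _ ≤ (m + 1) ^ m * ((2 * m)‼ ^ 2) ^ m := by
        gcongr
        exact doubleFactorial_even_le m
      _ = ((m + 1) * (2 * m)‼ ^ 2) ^ m := by rw [mul_pow]
      _ ≤ ((2 * m + 1)‼ ^ 2) ^ m := by
        gcongr
        exact wallis_even m
      _ = _ := by rw [← pow_mul]
  · have h1 : (2 * m + 1)‼ ≤ (2 * m + 2)‼ := by
      have h := wallis_odd m
      refine (Nat.pow_le_pow_iff_left (n := 2) (by omega)).1 ?_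
      nlinarith [Nat.zero_le (m * (2 * m + 1)‼ ^ 2)]
    calc (2 * m + 1)‼ ^ (2 * m + 1 + 1)
        = (2 * m + 1)‼ * ((2 * m + 1)‼ ^ 2) ^ m * (2 * m + 1)‼ := by ring
      _ ≤ (2 * m + 3) ^ m * ((2 * m + 1)‼ ^ 2) ^ m * (2 * m + 2)‼ := by
        gcongr
        exact doubleFactorial_odd_le m
      _ = ((2 * m + 3) * (2 * m + 1)‼ ^ 2) ^ m * (2 * m + 2)‼ := by rw [mul_pow]
      _ ≤ ((2 * m + 2)‼ ^ 2) ^ m * (2 * m + 2)‼ := by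
        gcongr
        exact wallis_odd m
      _ = _ := by rw [← pow_mul, ← pow_succ]

lemma doubleFactorial_pow_le (k n : ℕ) (hk : 1 ≤ k) (hkn : k ≤ n) : (k‼) ^ n ≤ (n‼) ^ k := by
  induction n, hkn using Nat.le_induction with
  | base => exact le_rfl
  | succ n hn ih =>
    refine (Nat.pow_le_pow_iff_left (n := n) (by omega)).1 ?_
    calc (k‼ ^ (n + 1)) ^ n = (k‼ ^ n) ^ (n + 1) := pow_right_comm _ _ _
      _ ≤ (n‼ ^ k) ^ (n + 1) := by gcongr
      _ = (n‼ ^ (n + 1)) ^ k := pow_right_comm _ _ _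
      _ ≤ ((n + 1)‼ ^ n) ^ k :=
        Nat.pow_le_pow_left (doubleFactorial_step n) k
      _ = _ := pow_right_comm _ _ _

lemma pow_succ_lt_self_pow (n : ℕ) (hn : 3 ≤ n) : (n + 1) ^ n < n ^ (n + 1) := by
  induction n, hn using Nat.le_induction with
  | base => norm_num
  | succ n hn ih =>
    -- Multiply by `n ^ (n + 1)` and use `(n + 2) * n ≤ (n + 1) ^ 2`.
    refine lt_of_mul_lt_mul_right (a := n ^ (n + 1)) ?_ (Nat.zero_le _)
    calc (n + 1 + 1) ^ (n + 1) * n ^ (n + 1) = ((n + 1 + 1) * n) ^ (n + 1) := by rw [mul_pow]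
      _ ≤ ((n + 1) ^ 2) ^ (n + 1) := by
        apply Nat.pow_le_pow_left
        nlinarith
      _ = (n + 1) ^ (n + 1 + 1) * (n + 1) ^ n := by
        rw [← pow_mul, ← pow_add]
        congr 1
        ring
      _ < (n + 1) ^ (n + 1 + 1) * n ^ (n + 1) := by gcongr

lemma pow_lt_pow_swap (k n : ℕ) (hk : 3 ≤ k) (hkn : k < n) : n ^ k < k ^ n := by
  induction n, hkn using Nat.le_induction with
  | base => exact pow_succ_lt_self_pow k hk
  | succ n hn ih =>
    refine (Nat.pow_lt_pow_iff_left (n := n) (by omega)).1 ?_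
    calc ((n + 1) ^ k) ^ n = ((n + 1) ^ n) ^ k := pow_right_comm _ _ _
      _ ≤ (n ^ (n + 1)) ^ k :=
        Nat.pow_le_pow_left (pow_succ_lt_self_pow n (by omega)).le k
      _ = (n ^ k) ^ (n + 1) := pow_right_comm _ _ _
      _ < (k ^ n) ^ (n + 1) := Nat.pow_lt_pow_left ih (by omega)
      _ = _ := pow_right_comm _ _ _

theorem doubleFactorial_sub_gt (n k : ℕ) (hk : 3 ≤ k) (hnk : k < n) :
    ((k‼ : ℤ)) ^ n - (k : ℤ) ^ n < ((n‼ : ℤ)) ^ k - (n : ℤ) ^ k := by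
  have h1 : ((k‼ : ℤ)) ^ n ≤ ((n‼ : ℤ)) ^ k := by
    exact_mod_cast doubleFactorial_pow_le k n (by omega) hnk.le
  have h2 : (n : ℤ) ^ k < (k : ℤ) ^ n := by
    exact_mod_cast pow_lt_pow_swap k n hk hnk
  linarith
end
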